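/- For all real x and every natural number j, the physicists' Hermite polynomial satisfies the bound |H_j(x)| \le k \sqrt{j!} \, 2^{j/2} e^{x^2/2} with constant k = 1.086435. -/

import Mathlib

def hermiteH : ℕ → ℝ → ℝ
  | 0, _ => 1
  | 1, x => 2 * x
  | n + 2, x => 2 * x * hermiteH (n + 1) x - 2 * ((n : ℝ) + 1) * hermiteH n x

/-!
The constant `1` suffices. The Hermite function `y = Hₙ exp(-x²/2)` solves
`y'' + (2n + 1 - x²) y = 0`. While `x² ≤ 2n - 1`, the Liouville substitution `u = y / r` with
`r = (2n + 1 - x²)^(-1/4)` gives an equation whose Sonin energy decreases, so that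
`√(2n + 1 - x²) y²` is at most the energy at `0`; that energy is at most `√2 2ⁿ n!`, and
`√(2n + 1 - x²) ≥ √2`. For `x ≥ 0` with `x² ≥ 2n - 1`, the recurrence forces `Hₙ₊₁ ≥ x Hₙ ≥ 0`,
which says that `y` is nonnegative and nonincreasing.
-/

open Real Set

section Sonin

variable {D : Set ℝ}

theorem antitoneOn_sonin_energy (hD : Convex ℝ D) {a p p' u v : ℝ → ℝ}
    (hu : ∀ x ∈ D, HasDerivAt u (a x * v x) x)
    (hv : ∀ x ∈ D, HasDerivAt v (-(a x * p x * u x)) x)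
    (hp : ∀ x ∈ D, HasDerivAt p (p' x) x) (hp₀ : ∀ x ∈ D, p x ≠ 0)
    (hp' : ∀ x ∈ D, 0 ≤ p' x) :
    AntitoneOn (fun x ↦ u x ^ 2 + v x ^ 2 / p x) D := by
  have hderiv : ∀ x ∈ D,
      HasDerivAt (fun x ↦ u x ^ 2 + v x ^ 2 / p x) (-(p' x * (v x / p x) ^ 2)) x := by
    intro x hx
    have hpx := hp₀ x hx
    refine (((hu x hx).fun_pow 2).fun_add
      (((hv x hx).fun_pow 2).fun_div (hp x hx) hpx)).congr_deriv ?_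
    field_simp
    ring
  refine antitoneOn_of_hasDerivWithinAt_nonpos hD
    (fun x hx ↦ (hderiv x hx).continuousAt.continuousWithinAt)
    (fun x hx ↦ (hderiv x (interior_subset hx)).hasDerivWithinAt) fun x hx ↦ ?_
  exact neg_nonpos.mpr (mul_nonneg (hp' x (interior_subset hx)) (sq_nonneg _))

theorem antitoneOn_liouville_energy (hD : Convex ℝ D) {q y y' r r' r'' p p' : ℝ → ℝ}
    (hy : ∀ x ∈ D, HasDerivAt y (y' x) x) (hy' : ∀ x ∈ D, HasDerivAt y' (-(q x * y x)) x)
    (hr : ∀ x ∈ D, HasDerivAt r (r' x) x) (hr' : ∀ x ∈ D, HasDerivAt r' (r'' x) x)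
    (hr₀ : ∀ x ∈ D, r x ≠ 0) (hpr : ∀ x ∈ D, p x = r x ^ 3 * (r'' x + q x * r x))
    (hp : ∀ x ∈ D, HasDerivAt p (p' x) x) (hp₀ : ∀ x ∈ D, p x ≠ 0)
    (hp' : ∀ x ∈ D, 0 ≤ p' x) :
    AntitoneOn (fun x ↦ (y x / r x) ^ 2 + (r x * y' x - r' x * y x) ^ 2 / p x) D := by
  refine antitoneOn_sonin_energy hD (a := fun x ↦ (r x ^ 2)⁻¹) (fun x hx ↦ ?_) (fun x hx ↦ ?_)
    hp hp₀ hp'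
  · refine ((hy x hx).fun_div (hr x hx) (hr₀ x hx)).congr_deriv ?_
    ring
  · refine (((hr x hx).fun_mul (hy' x hx)).fun_sub ((hr' x hx).fun_mul (hy x hx))).congr_deriv ?_
    have hrx := hr₀ x hx
    rw [hpr x hx]
    field_simp
    ring

end Sonin

/-- The leading-order WKB amplitude `(N - x²)^(-1/4)` of the solutions of `y'' + (N - x²) y = 0`
in the oscillatory region `x² < N`; dividing a solution by it is the Liouville substitution. -/
noncomputable def wkbAmplitude (N x : ℝ) : ℝ := (N - x ^ 2) ^ (-1 / 4 : ℝ)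

section WKB

variable {N x : ℝ}

theorem wkbAmplitude_pos (h : x ^ 2 < N) : 0 < wkbAmplitude N x :=
  rpow_pos_of_pos (sub_pos.mpr h) _

theorem inv_wkbAmplitude_sq (h : x ^ 2 < N) : (wkbAmplitude N x ^ 2)⁻¹ = √(N - x ^ 2) := by
  have hq : 0 ≤ N - x ^ 2 := (sub_pos.mpr h).le
  rw [wkbAmplitude, ← rpow_mul_natCast hq, ← rpow_neg hq, sqrt_eq_rpow]
  norm_num

theorem mul_wkbAmplitude_pow_four (h : x ^ 2 < N) : (N - x ^ 2) * wkbAmplitude N x ^ 4 = 1 := by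
  have hq : 0 < N - x ^ 2 := sub_pos.mpr h
  rw [wkbAmplitude, ← rpow_mul_natCast hq.le]
  norm_num [rpow_neg_one, hq.ne']

theorem hasDerivAt_wkbAmplitude (h : x ^ 2 < N) :
    HasDerivAt (wkbAmplitude N) (x / 2 * wkbAmplitude N x ^ 5) x := by
  have hq : 0 < N - x ^ 2 := sub_pos.mpr h
  refine (((hasDerivAt_pow 2 x).const_sub N).rpow_const (p := -1 / 4) (.inl hq.ne')).congr_deriv ?_
  rw [wkbAmplitude, ← rpow_mul_natCast hq.le,
    show (-1 / 4 - 1 : ℝ) = -1 / 4 * (5 : ℕ) by norm_num]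
  push_cast
  ring

theorem hasDerivAt_deriv_wkbAmplitude (h : x ^ 2 < N) :
    HasDerivAt (fun t ↦ t / 2 * wkbAmplitude N t ^ 5)
      (wkbAmplitude N x ^ 5 / 2 + 5 / 4 * x ^ 2 * wkbAmplitude N x ^ 9) x := by
  refine (((hasDerivAt_id' x).div_const 2).fun_mul
    ((hasDerivAt_wkbAmplitude h).fun_pow 5)).congr_deriv ?_
  ring

theorem antitoneOn_wkb_energy {D : Set ℝ} (hD : Convex ℝ D) (hDN : D ⊆ Ico 0 √N)
    {y y' : ℝ → ℝ} (hy : ∀ t ∈ D, HasDerivAt y (y' t) t)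
    (hy' : ∀ t ∈ D, HasDerivAt y' (-((N - t ^ 2) * y t)) t) :
    AntitoneOn (fun t ↦ (y t / wkbAmplitude N t) ^ 2 +
      (wkbAmplitude N t * y' t - t / 2 * wkbAmplitude N t ^ 5 * y t) ^ 2 /
        (1 + wkbAmplitude N t ^ 8 / 2 + 5 / 4 * t ^ 2 * wkbAmplitude N t ^ 12)) D := by
  have hN : ∀ t ∈ D, t ^ 2 < N := fun t ht ↦ (lt_sqrt (hDN ht).1).mp (hDN ht).2
  have hderiv : ∀ t ∈ D, HasDerivAt
      (fun t ↦ 1 + wkbAmplitude N t ^ 8 / 2 + 5 / 4 * t ^ 2 * wkbAmplitude N t ^ 12)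
      (9 / 2 * t * wkbAmplitude N t ^ 12 + 15 / 2 * t ^ 3 * wkbAmplitude N t ^ 16) t := by
    intro t ht
    have hr := hasDerivAt_wkbAmplitude (hN t ht)
    refine ((((hr.fun_pow 8).div_const 2).const_add 1).fun_add
      (((hasDerivAt_pow 2 t).const_mul (5 / 4)).fun_mul (hr.fun_pow 12))).congr_deriv ?_
    ring
  -- Since `(N - t²) r⁴ = 1`, the potential `r³ (r'' + (N - t²) r)` is `1 + r⁸ / 2 + 5 t² r¹² / 4`.
  refine antitoneOn_liouville_energy hD hy hy'
    (fun t ht ↦ hasDerivAt_wkbAmplitude (hN t ht))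
    (fun t ht ↦ hasDerivAt_deriv_wkbAmplitude (hN t ht))
    (fun t ht ↦ (wkbAmplitude_pos (hN t ht)).ne')
    (fun t ht ↦ by linear_combination -mul_wkbAmplitude_pow_four (hN t ht)) hderiv
    (fun t _ ↦ by positivity) fun t ht ↦ ?_
  have ht₀ : 0 ≤ t := (hDN ht).1
  positivity

theorem sqrt_mul_sq_le_of_hasDerivAt {y y' : ℝ → ℝ} (hx : 0 ≤ x) (hxN : x ^ 2 < N)
    (hy : ∀ t ∈ Icc 0 x, HasDerivAt y (y' t) t)
    (hy' : ∀ t ∈ Icc 0 x, HasDerivAt y' (-((N - t ^ 2) * y t)) t) :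
    √(N - x ^ 2) * y x ^ 2 ≤ √N * (y 0 ^ 2 + y' 0 ^ 2 / N) := by
  have hN : 0 < N := (sq_nonneg x).trans_lt hxN
  have h₀N : (0 : ℝ) ^ 2 < N := by simpa using hN
  have hsub : Icc 0 x ⊆ Ico 0 √N := Icc_subset_Ico_right ((lt_sqrt hx).mpr hxN)
  have hanti := antitoneOn_wkb_energy (convex_Icc 0 x) hsub hy hy'
    (left_mem_Icc.mpr hx) (right_mem_Icc.mpr hx) hx
  have hr₀ : (wkbAmplitude N 0 ^ 2)⁻¹ = √N := by simpa using inv_wkbAmplitude_sq h₀N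
  have hr₀' : wkbAmplitude N 0 ^ 2 = √N / N := by
    rw [sqrt_div_self', ← hr₀, one_div, inv_inv]
  calc √(N - x ^ 2) * y x ^ 2 = (y x / wkbAmplitude N x) ^ 2 := by
        rw [← inv_wkbAmplitude_sq hxN, div_pow, inv_mul_eq_div]
    _ ≤ _ := le_add_of_nonneg_right (by positivity)
    _ ≤ _ := hanti
    _ ≤ (y 0 / wkbAmplitude N 0) ^ 2 + (wkbAmplitude N 0 * y' 0) ^ 2 := by
        simp only [zero_div, zero_mul, sub_zero]
        gcongr
        refine div_le_self (sq_nonneg _) ?_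
        rw [add_assoc]
        exact le_add_of_nonneg_right (by positivity)
    _ = √N * (y 0 ^ 2 + y' 0 ^ 2 / N) := by
        rw [div_pow, mul_pow, ← inv_mul_eq_div, hr₀, hr₀']
        ring

end WKB

theorem hermiteH_add_two (n : ℕ) (x : ℝ) :
    hermiteH (n + 2) x = 2 * x * hermiteH (n + 1) x - 2 * ((n : ℝ) + 1) * hermiteH n x := by
  rw [hermiteH]

theorem hermiteH_neg (n : ℕ) (x : ℝ) : hermiteH n (-x) = (-1) ^ n * hermiteH n x := by
  induction n using Nat.twoStepInduction with
  | zero => simp [hermiteH]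
  | one => simp [hermiteH]
  | more n ih₀ ih₁ => rw [hermiteH_add_two, hermiteH_add_two, ih₀, ih₁]; ring

theorem hasDerivAt_hermiteH (n : ℕ) (x : ℝ) :
    HasDerivAt (hermiteH n) (2 * x * hermiteH n x - hermiteH (n + 1) x) x := by
  induction n using Nat.twoStepInduction with
  | zero => simpa [hermiteH] using hasDerivAt_const x (1 : ℝ)
  | one =>
    refine ((hasDerivAt_id' x).const_mul 2).congr_deriv ?_
    simp [hermiteH]
  | more n ih₀ ih₁ =>
    refine ((((hasDerivAt_id' x).const_mul 2).fun_mul ih₁).fun_sub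
      (ih₀.const_mul (2 * ((n : ℝ) + 1)))).congr_deriv ?_
    simp only [hermiteH_add_two]
    push_cast
    ring

theorem hermiteH_nonneg_and_mul_le_succ (n : ℕ) {x : ℝ} (hx : 0 ≤ x)
    (hn : 2 * (n : ℝ) ≤ x ^ 2 + 1) :
    0 ≤ hermiteH n x ∧ x * hermiteH n x ≤ hermiteH (n + 1) x := by
  induction n using Nat.twoStepInduction with
  | zero => exact ⟨zero_le_one, by norm_num [hermiteH]; linarith⟩
  | one => exact ⟨by simpa [hermiteH] using hx, by norm_num [hermiteH] at hn ⊢; nlinarith⟩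
  | more n ih _ =>
    push_cast at hn
    obtain ⟨h₀, h₁⟩ := ih (by linarith)
    have hpos₁ : 0 ≤ hermiteH (n + 1) x := (mul_nonneg hx h₀).trans h₁
    have hsucc : (n : ℝ) + 1 ≤ x ^ 2 := by linarith [n.cast_nonneg (α := ℝ)]
    constructor
    · rw [hermiteH_add_two]
      linear_combination 2 * mul_le_mul_of_nonneg_left h₁ hx +
        2 * mul_le_mul_of_nonneg_right hsucc h₀
    · rw [hermiteH_add_two (n + 1), hermiteH_add_two]
      push_cast
      linear_combination 2 * ((n : ℝ) + 1) * h₁ + 2 * mul_le_mul_of_nonneg_left hn hpos₁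

theorem hermiteH_zero_mul_succ (n : ℕ) : hermiteH n 0 * hermiteH (n + 1) 0 = 0 := by
  induction n with
  | zero => simp [hermiteH]
  | succ n ih => rw [hermiteH_add_two]; linear_combination -2 * ((n : ℝ) + 1) * ih

theorem succ_mul_hermiteH_zero_pow_four_le (n : ℕ) :
    ((n : ℝ) + 1) * hermiteH n 0 ^ 4 ≤ (2 ^ n * n.factorial) ^ 2 := by
  induction n using Nat.twoStepInduction with
  | zero => simp [hermiteH]
  | one => simp [hermiteH]
  | more n ih _ =>
    rw [hermiteH_add_two, Nat.factorial_succ, Nat.factorial_succ]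
    push_cast
    calc ((n : ℝ) + 2 + 1) * (2 * 0 * hermiteH (n + 1) 0 - 2 * (n + 1) * hermiteH n 0) ^ 4
        = 16 * (n + 1) ^ 3 * hermiteH n 0 ^ 4 * ((n + 3) * (n + 1)) := by ring
      _ ≤ 16 * (n + 1) ^ 3 * hermiteH n 0 ^ 4 * (n + 2) ^ 2 := by gcongr; linarith
      _ = 16 * (n + 1) ^ 2 * (n + 2) ^ 2 * ((n + 1) * hermiteH n 0 ^ 4) := by ring
      _ ≤ 16 * (n + 1) ^ 2 * (n + 2) ^ 2 * (2 ^ n * n.factorial) ^ 2 := by gcongr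
      _ = (2 ^ (n + 2) * ((n + 1 + 1) * ((n + 1) * n.factorial))) ^ 2 := by ring

theorem hermiteH_zero_energy_le (n : ℕ) :
    √(2 * n + 1) * (hermiteH n 0 ^ 2 + hermiteH (n + 1) 0 ^ 2 / (2 * n + 1)) ≤
      √2 * (2 ^ n * n.factorial) := by
  refine (sq_le_sq₀ (by positivity) (by positivity)).mp ?_
  rw [mul_pow, mul_pow, sq_sqrt (by positivity), sq_sqrt zero_le_two]
  rcases mul_eq_zero.mp (hermiteH_zero_mul_succ n) with hz | hz
  · have h₁ := succ_mul_hermiteH_zero_pow_four_le (n + 1)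
    push_cast [Nat.factorial_succ] at h₁
    have hsq : (2 * (n : ℝ) + 1) * (0 ^ 2 + hermiteH (n + 1) 0 ^ 2 / (2 * n + 1)) ^ 2 =
        hermiteH (n + 1) 0 ^ 4 / (2 * n + 1) := by
      field_simp
      ring
    rw [hz, hsq, div_le_iff₀ (by positivity)]
    refine le_of_mul_le_mul_left (h₁.trans ?_) (by positivity : 0 < (n : ℝ) + 1 + 1)
    have hpoly : 4 * ((n : ℝ) + 1) ^ 2 ≤ 2 * ((n + 1 + 1) * (2 * n + 1)) := by nlinarith
    linear_combination ((2 : ℝ) ^ n * n.factorial) ^ 2 * hpoly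
  · rw [hz]
    calc (2 * (n : ℝ) + 1) * (hermiteH n 0 ^ 2 + 0 ^ 2 / (2 * n + 1)) ^ 2
        = (2 * n + 1) * hermiteH n 0 ^ 4 := by ring
      _ ≤ 2 * ((n + 1) * hermiteH n 0 ^ 4) := by
        rw [← mul_assoc]; gcongr; linarith
      _ ≤ 2 * (2 ^ n * n.factorial) ^ 2 := by
        gcongr
        exact succ_mul_hermiteH_zero_pow_four_le n

/-- The Hermite function `Hₙ(x) exp(-x²/2)`, a solution of `y'' + (2n + 1 - x²) y = 0`. It is left
unnormalized: its `L²` norm is not `1`. -/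
noncomputable def hermiteFun (n : ℕ) (x : ℝ) : ℝ := hermiteH n x * exp (-(x ^ 2 / 2))

theorem hermiteFun_apply_zero (n : ℕ) : hermiteFun n 0 = hermiteH n 0 := by simp [hermiteFun]

theorem hermiteFun_neg_sq (n : ℕ) (x : ℝ) : hermiteFun n (-x) ^ 2 = hermiteFun n x ^ 2 := by
  simp [hermiteFun, hermiteH_neg, mul_pow, ← pow_mul]

theorem hermiteFun_add_two (n : ℕ) (x : ℝ) :
    hermiteFun (n + 2) x =
      2 * x * hermiteFun (n + 1) x - 2 * ((n : ℝ) + 1) * hermiteFun n x := by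
  simp only [hermiteFun, hermiteH_add_two]
  ring

theorem hasDerivAt_hermiteFun (n : ℕ) (x : ℝ) :
    HasDerivAt (hermiteFun n) (x * hermiteFun n x - hermiteFun (n + 1) x) x := by
  refine ((hasDerivAt_hermiteH n x).fun_mul
    ((hasDerivAt_pow 2 x).div_const 2).fun_neg.exp).congr_deriv ?_
  simp only [hermiteFun]
  ring

theorem hasDerivAt_deriv_hermiteFun (n : ℕ) (x : ℝ) :
    HasDerivAt (fun t ↦ t * hermiteFun n t - hermiteFun (n + 1) t)
      (-((2 * n + 1 - x ^ 2) * hermiteFun n x)) x := by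
  refine (((hasDerivAt_id' x).fun_mul (hasDerivAt_hermiteFun n x)).fun_sub
    (hasDerivAt_hermiteFun (n + 1) x)).congr_deriv ?_
  rw [hermiteFun_add_two]
  ring

theorem hermiteFun_sq_le_of_sq_add_one_le (n : ℕ) {x : ℝ} (hx : 0 ≤ x)
    (hn : x ^ 2 + 1 ≤ 2 * n) : hermiteFun n x ^ 2 ≤ 2 ^ n * n.factorial := by
  have hsonin := sqrt_mul_sq_le_of_hasDerivAt hx (by linarith : x ^ 2 < 2 * (n : ℝ) + 1)
    (fun t _ ↦ hasDerivAt_hermiteFun n t) (fun t _ ↦ hasDerivAt_deriv_hermiteFun n t)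
  simp only [zero_mul, zero_sub, neg_sq, hermiteFun_apply_zero] at hsonin
  refine le_of_mul_le_mul_left ?_ (sqrt_pos.mpr two_pos)
  calc √2 * hermiteFun n x ^ 2 ≤ √(2 * n + 1 - x ^ 2) * hermiteFun n x ^ 2 := by
        gcongr; linarith
    _ ≤ √2 * (2 ^ n * n.factorial) := hsonin.trans (hermiteH_zero_energy_le n)

-- For `n = 0` the half-line is `[0, ∞)`, because `√(-1) = 0`.
theorem antitoneOn_hermiteFun (n : ℕ) : AntitoneOn (hermiteFun n) (Ici √(2 * (n : ℝ) - 1)) := by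
  refine antitoneOn_of_hasDerivWithinAt_nonpos (convex_Ici _)
    (fun t _ ↦ (hasDerivAt_hermiteFun n t).continuousAt.continuousWithinAt)
    (fun t _ ↦ (hasDerivAt_hermiteFun n t).hasDerivWithinAt) fun t ht ↦ ?_
  have ht : √(2 * n - 1) ≤ t := interior_subset ht
  have ht₀ : 0 ≤ t := (sqrt_nonneg _).trans ht
  have hle := (hermiteH_nonneg_and_mul_le_succ n ht₀
    (by linarith [(sqrt_le_left ht₀).mp ht])).2
  rw [hermiteFun, hermiteFun, ← mul_assoc, ← sub_mul]
  exact mul_nonpos_of_nonpos_of_nonneg (sub_nonpos.mpr hle) (exp_nonneg _)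

theorem hermiteFun_sq_le_of_le_sq_add_one (n : ℕ) {x : ℝ} (hx : 0 ≤ x)
    (hn : 2 * n ≤ x ^ 2 + 1) : hermiteFun n x ^ 2 ≤ 2 ^ n * n.factorial := by
  have hnonneg : 0 ≤ hermiteFun n x :=
    mul_nonneg (hermiteH_nonneg_and_mul_le_succ n hx hn).1 (exp_nonneg _)
  have hmem : √(2 * n - 1) ≤ x := sqrt_le_iff.mpr ⟨hx, by linarith⟩
  have hanti : hermiteFun n x ≤ hermiteFun n √(2 * (n : ℝ) - 1) :=
    antitoneOn_hermiteFun n self_mem_Ici hmem hmem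
  refine (pow_le_pow_left₀ hnonneg hanti 2).trans ?_
  rcases n.eq_zero_or_pos with rfl | hpos
  · norm_num [hermiteFun_apply_zero, hermiteH, sqrt_eq_zero_of_nonpos]
  · have hpos : (1 : ℝ) ≤ n := by exact_mod_cast hpos
    refine hermiteFun_sq_le_of_sq_add_one_le n (sqrt_nonneg _) ?_
    rw [sq_sqrt (by linarith)]
    linarith

theorem hermiteFun_sq_le (n : ℕ) (x : ℝ) : hermiteFun n x ^ 2 ≤ 2 ^ n * n.factorial := by
  wlog hx : 0 ≤ x generalizing x
  · simpa only [hermiteFun_neg_sq] using this (-x) (by linarith)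
  rcases le_total (x ^ 2 + 1) (2 * (n : ℝ)) with hn | hn
  · exact hermiteFun_sq_le_of_sq_add_one_le n hx hn
  · exact hermiteFun_sq_le_of_le_sq_add_one n hx hn

theorem hermite_upper_bound_general (x : ℝ) (j : ℕ) :
    |hermiteH j x| ≤ √(j.factorial : ℝ) * √2 ^ j * exp (x ^ 2 / 2) := by
  have hsq : hermiteFun j x ^ 2 ≤ (√(j.factorial : ℝ) * √2 ^ j) ^ 2 := by
    rw [mul_pow, pow_right_comm, sq_sqrt zero_le_two, sq_sqrt (by positivity), mul_comm]
    exact hermiteFun_sq_le j x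
  have habs := abs_le_of_sq_le_sq hsq (by positivity)
  rwa [hermiteFun, abs_mul, abs_exp, exp_neg, ← div_eq_mul_inv, div_le_iff₀ (exp_pos _)] at habs

theorem hermite_upper_bound (x : ℝ) (j : ℕ) :
    |hermiteH j x| ≤ 1.086435 * Real.sqrt (j.factorial : ℝ) * (Real.sqrt 2) ^ j *
      Real.exp (x ^ 2 / 2) := by
  refine (hermite_upper_bound_general x j).trans ?_
  gcongr
  exact le_mul_of_one_le_left (sqrt_nonneg _) (by norm_num)
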